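/- In the precision-test setup, if α₂ < 0, α₃ > 0, α₂′ > α₃ and ε > 0, then for every x > 0 the local powers are strictly ordered as Π₃(x) < Π₂(x) < Π₁(x) < Π₄(x); if instead ε < 0, the reversed strict inequalities Π₃(x) > Π₂(x) > Π₁(x) > Π₄(x) hold. -/

import Mathlib

/-!
All four tests share `b₁ + b₂ + b₃ = -α₃ ε³ / 6 + p ε / (2 φ)`, so after summation by parts the
local powers differ only through the terms `(b₂ + b₃) (G₃ - G₅) + b₃ (G₅ - G₇)`. The differences
of `b₂ + b₃` and of `b₃` along the chain score, Wald, likelihood ratio, gradient all have the sign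
of `ε`, hence the ordering follows from `G₇ < G₅ < G₃` (`ncChisqCDF_add_two_lt`).

That monotonicity in the degrees of freedom comes from the central case: since
`2 f_{m+2}' = f_m - f_{m+2}`, the central distribution functions satisfy
`F_m(x) - F_{m+2}(x) = 2 f_{m+2}(x) > 0`, and `G_{m,λ}` is a Poisson mixture of the `F_{m+2j}`.
Only `m ≥ 2` is needed, where the densities are continuous up to the origin.
-/

/-- The chi-square density with `m` degrees of freedom:
`f_m(x) = x^(m/2-1) e^(-x/2) / (2^(m/2) Γ(m/2))` for `x > 0`, and `0` otherwise. -/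
noncomputable def chisqPDF (m : ℕ) (x : ℝ) : ℝ :=
  if 0 < x then
    x ^ ((m : ℝ) / 2 - 1) * Real.exp (-x / 2) /
      (2 ^ ((m : ℝ) / 2) * Real.Gamma ((m : ℝ) / 2))
  else 0

/-- The noncentral chi-square density with `m` degrees of freedom and
noncentrality parameter `lam`:
`g_{m,λ}(x) = Σ_{j=0}^∞ [e^{-λ/2} (λ/2)^j / j!] f_{m+2j}(x)`. -/
noncomputable def ncChisqPDF (m : ℕ) (lam x : ℝ) : ℝ :=
  ∑' j : ℕ, Real.exp (-lam / 2) * (lam / 2) ^ j / (Nat.factorial j : ℝ) *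
    chisqPDF (m + 2 * j) x

/-- The noncentral chi-square distribution function
`G_{m,λ}(x) = ∫_0^x g_{m,λ}(u) du`. -/
noncomputable def ncChisqCDF (m : ℕ) (lam x : ℝ) : ℝ :=
  ∫ u in (0 : ℝ)..x, ncChisqPDF m lam u

/-- The order-`n^{-1/2}` local power `1 - G_{1,λ}(x) - Σ_{k=0}^3 b_k G_{1+2k,λ}(x)`
of a test whose expansion coefficients are `b₀ = -(b₁+b₂+b₃), b₁, b₂, b₃`. -/
noncomputable def localPower (b1 b2 b3 lam x : ℝ) : ℝ :=
  1 - ncChisqCDF 1 lam x -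
    (-(b1 + b2 + b3) * ncChisqCDF 1 lam x + b1 * ncChisqCDF 3 lam x +
      b2 * ncChisqCDF 5 lam x + b3 * ncChisqCDF 7 lam x)

/-- Local power `Π₁` of the likelihood ratio test of `H₀ : φ = φ₀` in a
dispersion model, with `λ = -α₂ ε²`. -/
noncomputable def PiLR (α₂ α₂' α₃ ε φ : ℝ) (p : ℕ) (x : ℝ) : ℝ :=
  localPower ((α₂' - α₃) * ε ^ 3 / 2 + p * ε / (2 * φ))
    ((2 * α₃ - 3 * α₂') * ε ^ 3 / 6) 0 (-α₂ * ε ^ 2) x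

/-- Local power `Π₂` of the Wald test of `H₀ : φ = φ₀` in a dispersion model. -/
noncomputable def PiWald (α₂ α₂' α₃ ε φ : ℝ) (p : ℕ) (x : ℝ) : ℝ :=
  localPower ((α₂' - α₃) * ε ^ 3 / 2 - α₃ * ε / (2 * α₂) + p * ε / (2 * φ))
    (-((α₂' - α₃) * ε ^ 3) / 2 + α₃ * ε / (2 * α₂)) (-(α₃ * ε ^ 3) / 6)
    (-α₂ * ε ^ 2) x

/-- Local power `Π₃` of the score test of `H₀ : φ = φ₀` in a dispersion model. -/
noncomputable def PiScore (α₂ α₂' α₃ ε φ : ℝ) (p : ℕ) (x : ℝ) : ℝ :=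
  localPower ((α₂' - α₃) * ε ^ 3 / 2 + (2 * α₃ - 3 * α₂') * ε / (2 * α₂) + p * ε / (2 * φ))
    (-((2 * α₃ - 3 * α₂') * ε) / (2 * α₂)) ((2 * α₃ - 3 * α₂') * ε ^ 3 / 6)
    (-α₂ * ε ^ 2) x

/-- Local power `Π₄` of the gradient test of `H₀ : φ = φ₀` in a dispersion model. -/
noncomputable def PiGrad (α₂ α₂' α₃ ε φ : ℝ) (p : ℕ) (x : ℝ) : ℝ :=
  localPower ((α₂' - α₃) * ε ^ 3 / 2 + α₃ * ε / (4 * α₂) + p * ε / (2 * φ))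
    (-((2 * α₂' - α₃) * ε ^ 3) / 4 - α₃ * ε / (4 * α₂)) (α₃ * ε ^ 3 / 12)
    (-α₂ * ε ^ 2) x

open MeasureTheory

/-- The analytic formula for the chi-square density without the cut-off at `0`; for `2 ≤ m` it
is continuous on all of `ℝ`. -/
noncomputable def chisqFormula (m : ℕ) (x : ℝ) : ℝ :=
  x ^ ((m : ℝ) / 2 - 1) * Real.exp (-x / 2) / (2 ^ ((m : ℝ) / 2) * Real.Gamma ((m : ℝ) / 2))

/-- The central chi-square distribution function. -/
noncomputable def chisqCDF (m : ℕ) (x : ℝ) : ℝ := ∫ u in Set.Ioc 0 x, chisqPDF m u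

lemma chisqPDF_of_pos (m : ℕ) {x : ℝ} (hx : 0 < x) : chisqPDF m x = chisqFormula m x := by
  simp [chisqPDF, chisqFormula, hx]

lemma chisqFormula_continuous (m : ℕ) (hm : 2 ≤ m) : Continuous (chisqFormula m) := by
  have h : (0 : ℝ) ≤ (m : ℝ) / 2 - 1 := by
    have : (2 : ℝ) ≤ m := by exact_mod_cast hm
    linarith
  unfold chisqFormula
  exact ((Real.continuous_rpow_const h).mul (by fun_prop)).div_const _

lemma chisqFormula_pos (m : ℕ) (hm : 2 ≤ m) {x : ℝ} (hx : 0 < x) : 0 < chisqFormula m x := by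
  have hm' : (0 : ℝ) < (m : ℝ) / 2 := by
    have : (2 : ℝ) ≤ m := by exact_mod_cast hm
    linarith
  have := Real.Gamma_pos_of_pos hm'
  unfold chisqFormula
  positivity

lemma chisqPDF_nonneg (m : ℕ) (hm : 2 ≤ m) (x : ℝ) : 0 ≤ chisqPDF m x := by
  by_cases hx : 0 < x
  · rw [chisqPDF_of_pos m hx]
    exact (chisqFormula_pos m hm hx).le
  · simp [chisqPDF, hx]

lemma chisqPDF_integrableOn (m : ℕ) (hm : 2 ≤ m) (x : ℝ) :
    IntegrableOn (chisqPDF m) (Set.Ioc 0 x) := by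
  have h : IntegrableOn (chisqFormula m) (Set.Ioc 0 x) :=
    ((chisqFormula_continuous m hm).integrableOn_Icc (a := 0) (b := x)).mono_set
      Set.Ioc_subset_Icc_self
  exact h.congr_fun (fun u hu => (chisqPDF_of_pos m hu.1).symm) measurableSet_Ioc

lemma chisqFormula_hasDerivAt (m : ℕ) (hm : 2 ≤ m) {u : ℝ} (hu : 0 < u) :
    HasDerivAt (fun v => 2 * chisqFormula (m + 2) v)
      (chisqFormula m u - chisqFormula (m + 2) u) u := by
  have hm' : (0 : ℝ) < (m : ℝ) / 2 := by
    have : (2 : ℝ) ≤ m := by exact_mod_cast hm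
    linarith
  have hG := Real.Gamma_pos_of_pos hm'
  have he : ((m + 2 : ℕ) : ℝ) / 2 = (m : ℝ) / 2 + 1 := by push_cast; ring
  have hexp : HasDerivAt (fun v : ℝ => Real.exp (-v / 2)) (Real.exp (-u / 2) * (-1 / 2)) u :=
    (((hasDerivAt_id u).neg).div_const 2).exp
  have hpow : HasDerivAt (fun v : ℝ => v ^ ((m : ℝ) / 2))
      ((m : ℝ) / 2 * u ^ ((m : ℝ) / 2 - 1)) u :=
    Real.hasDerivAt_rpow_const (Or.inl hu.ne')
  have h := ((hpow.mul hexp).div_const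
    (2 ^ ((m : ℝ) / 2 + 1) * Real.Gamma ((m : ℝ) / 2 + 1))).const_mul 2
  unfold chisqFormula
  rw [he, add_sub_cancel_right]
  refine h.congr_deriv ?_
  rw [Real.Gamma_add_one hm'.ne', Real.rpow_add_one two_ne_zero]
  have h2 : (0 : ℝ) < 2 ^ ((m : ℝ) / 2) := by positivity
  generalize (2 : ℝ) ^ ((m : ℝ) / 2) = c at *
  generalize u ^ ((m : ℝ) / 2) = a at *
  generalize u ^ ((m : ℝ) / 2 - 1) = b at *
  generalize Real.Gamma ((m : ℝ) / 2) = g at *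
  generalize (m : ℝ) / 2 = k at *
  field_simp
  ring

/-- `F_m(x) - F_{m+2}(x) = 2 f_{m+2}(x)`. -/
lemma chisqCDF_sub (m : ℕ) (hm : 2 ≤ m) {x : ℝ} (hx : 0 < x) :
    chisqCDF m x - chisqCDF (m + 2) x = 2 * chisqFormula (m + 2) x := by
  have hc := chisqFormula_continuous m hm
  have hc2 := chisqFormula_continuous (m + 2) (by omega)
  have h0 : chisqFormula (m + 2) 0 = 0 := by
    have : ((m + 2 : ℕ) : ℝ) / 2 - 1 ≠ 0 := by
      have : (2 : ℝ) ≤ m := by exact_mod_cast hm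
      push_cast
      linarith
    simp only [chisqFormula]
    rw [Real.zero_rpow this]
    simp
  have key := intervalIntegral.integral_eq_sub_of_hasDerivAt_of_le hx.le
    (f := fun v => 2 * chisqFormula (m + 2) v) (by fun_prop)
    (fun u hu => chisqFormula_hasDerivAt m hm hu.1)
    ((hc.sub hc2).intervalIntegrable 0 x)
  rw [h0, intervalIntegral.integral_of_le hx.le] at key
  rw [chisqCDF, chisqCDF, ← integral_sub (chisqPDF_integrableOn m hm x)
    (chisqPDF_integrableOn (m + 2) (by omega) x)]
  rw [setIntegral_congr_fun measurableSet_Ioc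
    (g := fun u => chisqFormula m u - chisqFormula (m + 2) u)
    (fun u hu => by simp only [chisqPDF_of_pos _ hu.1]), key]
  ring

lemma chisqCDF_add_two_lt (m : ℕ) (hm : 2 ≤ m) {x : ℝ} (hx : 0 < x) :
    chisqCDF (m + 2) x < chisqCDF m x := by
  linarith [chisqCDF_sub m hm hx, chisqFormula_pos (m + 2) (by omega) hx]

lemma chisqCDF_add_le (m : ℕ) (hm : 2 ≤ m) {x : ℝ} (hx : 0 < x) (j : ℕ) :
    chisqCDF (m + 2 * j) x ≤ chisqCDF m x := by
  induction j with
  | zero => simp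
  | succ j ih => exact (chisqCDF_add_two_lt (m + 2 * j) (by omega) hx).le.trans ih

/-- The noncentral distribution function is the Poisson mixture of central ones. The interchange
of sum and integral is justified by `F_{m+2j}(x) ≤ F_m(x)`. -/
lemma ncChisqCDF_hasSum (m : ℕ) (hm : 2 ≤ m) {lam x : ℝ} (hl : 0 < lam) (hx : 0 < x) :
    HasSum (fun j : ℕ => Real.exp (-lam / 2) * (lam / 2) ^ j / (Nat.factorial j : ℝ) *
      chisqCDF (m + 2 * j) x) (ncChisqCDF m lam x) := by
  have hw : ∀ j : ℕ, 0 ≤ Real.exp (-lam / 2) * (lam / 2) ^ j / (Nat.factorial j : ℝ) :=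
    fun j => by positivity
  have hsum : Summable
      (fun j : ℕ => Real.exp (-lam / 2) * (lam / 2) ^ j / (Nat.factorial j : ℝ)) := by
    simpa only [mul_div_assoc] using
      (Real.summable_pow_div_factorial (lam / 2)).mul_left (Real.exp (-lam / 2))
  have hint : ∀ j : ℕ, ∫ u in Set.Ioc 0 x,
      Real.exp (-lam / 2) * (lam / 2) ^ j / (Nat.factorial j : ℝ) * chisqPDF (m + 2 * j) u =
      Real.exp (-lam / 2) * (lam / 2) ^ j / (Nat.factorial j : ℝ) * chisqCDF (m + 2 * j) x :=
    fun j => integral_const_mul _ _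
  have h := hasSum_integral_of_summable_integral_norm
    (μ := volume.restrict (Set.Ioc 0 x))
    (F := fun (j : ℕ) u => Real.exp (-lam / 2) * (lam / 2) ^ j / (Nat.factorial j : ℝ) *
      chisqPDF (m + 2 * j) u)
    (fun j => (chisqPDF_integrableOn (m + 2 * j) (by omega) x).const_mul _) ?_
  · simp only [hint] at h
    rw [ncChisqCDF, intervalIntegral.integral_of_le hx.le]
    exact h
  · have hn : ∀ (j : ℕ) (u : ℝ), ‖Real.exp (-lam / 2) * (lam / 2) ^ j / (Nat.factorial j : ℝ) *
        chisqPDF (m + 2 * j) u‖ =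
        Real.exp (-lam / 2) * (lam / 2) ^ j / (Nat.factorial j : ℝ) *
        chisqPDF (m + 2 * j) u := fun j u =>
      Real.norm_of_nonneg (mul_nonneg (hw j) (chisqPDF_nonneg _ (by omega) u))
    simp only [hn, hint]
    refine Summable.of_nonneg_of_le (fun j => mul_nonneg (hw j) ?_)
      (fun j => mul_le_mul_of_nonneg_left (chisqCDF_add_le m hm hx j) (hw j))
      (hsum.mul_right (chisqCDF m x))
    exact integral_nonneg fun u => chisqPDF_nonneg _ (by omega) u

lemma ncChisqCDF_add_two_lt (m : ℕ) (hm : 2 ≤ m) {lam x : ℝ} (hl : 0 < lam) (hx : 0 < x) :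
    ncChisqCDF (m + 2) lam x < ncChisqCDF m lam x := by
  have hlt : ∀ j : ℕ, Real.exp (-lam / 2) * (lam / 2) ^ j / (Nat.factorial j : ℝ) *
      chisqCDF (m + 2 + 2 * j) x <
      Real.exp (-lam / 2) * (lam / 2) ^ j / (Nat.factorial j : ℝ) * chisqCDF (m + 2 * j) x := by
    intro j
    have h := chisqCDF_add_two_lt (m + 2 * j) (by omega) hx
    rw [show m + 2 * j + 2 = m + 2 + 2 * j by omega] at h
    exact mul_lt_mul_of_pos_left h (by positivity)
  exact hasSum_lt (fun j => (hlt j).le) (hlt 0) (ncChisqCDF_hasSum (m + 2) (by omega) hl hx)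
    (ncChisqCDF_hasSum m hm hl hx)

/-- **Ordering of local powers for the precision-parameter tests.**
If `α₂ < 0`, `α₃ > 0` and `α₂′ > α₃`, then for every `x > 0` the local powers
satisfy `Π₃ < Π₂ < Π₁ < Π₄` when `ε > 0`, and the reversed strict inequalities
`Π₃ > Π₂ > Π₁ > Π₄` when `ε < 0`. -/
theorem precision_local_power_ordering (α₂ α₂' α₃ ε φ : ℝ) (hα₂ : α₂ < 0)
    (hα₃ : 0 < α₃) (hα₂' : α₃ < α₂') (hφ : 0 < φ) (p : ℕ) (hp : 1 ≤ p)
    (x : ℝ) (hx : 0 < x) :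
    (0 < ε →
      PiScore α₂ α₂' α₃ ε φ p x < PiWald α₂ α₂' α₃ ε φ p x ∧
      PiWald α₂ α₂' α₃ ε φ p x < PiLR α₂ α₂' α₃ ε φ p x ∧
      PiLR α₂ α₂' α₃ ε φ p x < PiGrad α₂ α₂' α₃ ε φ p x) ∧
    (ε < 0 →
      PiGrad α₂ α₂' α₃ ε φ p x < PiLR α₂ α₂' α₃ ε φ p x ∧
      PiLR α₂ α₂' α₃ ε φ p x < PiWald α₂ α₂' α₃ ε φ p x ∧
      PiWald α₂ α₂' α₃ ε φ p x < PiScore α₂ α₂' α₃ ε φ p x) := by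
  -- The three gaps between consecutive powers, as combinations of `G₃ - G₅` and `G₅ - G₇`.
  have hWS : PiWald α₂ α₂' α₃ ε φ p x - PiScore α₂ α₂' α₃ ε φ p x =
      ε * (3 * (α₂' - α₃) / (2 * (-α₂)) *
        (ncChisqCDF 3 (-α₂ * ε ^ 2) x - ncChisqCDF 5 (-α₂ * ε ^ 2) x) +
      (α₂' - α₃) * ε ^ 2 / 2 *
        (ncChisqCDF 5 (-α₂ * ε ^ 2) x - ncChisqCDF 7 (-α₂ * ε ^ 2) x)) := by
    have := hα₂.ne
    simp only [PiWald, PiScore, localPower]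
    field_simp
    ring
  have hLW : PiLR α₂ α₂' α₃ ε φ p x - PiWald α₂ α₂' α₃ ε φ p x =
      ε * (α₃ / (2 * (-α₂)) *
        (ncChisqCDF 3 (-α₂ * ε ^ 2) x - ncChisqCDF 5 (-α₂ * ε ^ 2) x) +
      α₃ * ε ^ 2 / 6 *
        (ncChisqCDF 5 (-α₂ * ε ^ 2) x - ncChisqCDF 7 (-α₂ * ε ^ 2) x)) := by
    have := hα₂.ne
    simp only [PiWald, PiLR, localPower]
    field_simp
    ring
  have hGL : PiGrad α₂ α₂' α₃ ε φ p x - PiLR α₂ α₂' α₃ ε φ p x =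
      ε * (α₃ / (4 * (-α₂)) *
        (ncChisqCDF 3 (-α₂ * ε ^ 2) x - ncChisqCDF 5 (-α₂ * ε ^ 2) x) +
      α₃ * ε ^ 2 / 12 *
        (ncChisqCDF 5 (-α₂ * ε ^ 2) x - ncChisqCDF 7 (-α₂ * ε ^ 2) x)) := by
    have := hα₂.ne
    simp only [PiGrad, PiLR, localPower]
    field_simp
    ring
  have hpos : ε ≠ 0 → ∀ a b : ℝ, 0 < a → 0 < b →
      0 < a * (ncChisqCDF 3 (-α₂ * ε ^ 2) x - ncChisqCDF 5 (-α₂ * ε ^ 2) x) +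
        b * (ncChisqCDF 5 (-α₂ * ε ^ 2) x - ncChisqCDF 7 (-α₂ * ε ^ 2) x) := by
    intro hε a b ha hb
    have hl : 0 < -α₂ * ε ^ 2 := mul_pos (neg_pos.2 hα₂) (by positivity)
    have h3 := sub_pos.2 (ncChisqCDF_add_two_lt 3 (by norm_num) hl hx)
    have h5 := sub_pos.2 (ncChisqCDF_add_two_lt 5 (by norm_num) hl hx)
    exact add_pos (mul_pos ha h3) (mul_pos hb h5)
  have hn : 0 < -α₂ := neg_pos.2 hα₂
  have hd : 0 < α₂' - α₃ := sub_pos.2 hα₂'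
  constructor
  · intro hε
    refine ⟨sub_pos.1 (hWS ▸ mul_pos hε ?_), sub_pos.1 (hLW ▸ mul_pos hε ?_),
      sub_pos.1 (hGL ▸ mul_pos hε ?_)⟩ <;>
    exact hpos hε.ne' _ _ (by positivity) (by positivity)
  · intro hε
    have hε2 : 0 < ε ^ 2 := by have := hε.ne; positivity
    refine ⟨sub_neg.1 (hGL ▸ mul_neg_of_neg_of_pos hε ?_),
      sub_neg.1 (hLW ▸ mul_neg_of_neg_of_pos hε ?_),
      sub_neg.1 (hWS ▸ mul_neg_of_neg_of_pos hε ?_)⟩ <;>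
    exact hpos hε.ne _ _ (by positivity) (by positivity)
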